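/- arXiv:2507.03820 — 4 statements merged into one kernel-verified Lean document; each statement's English description precedes it below -/
import Mathlib

section
/- Let μ : ℝ[X] → ℝ be linear with μ(1) = 1 and μ(X) = 0, and set κ = log_∗ μ (so κ(1) = κ(X) = 0). Then the Wick map W(X^n) = Σ_{k=0}^n (n choose k) μ^{−1}(X^k) X^{n−k} satisfies, for every n ≥ 0, W(X^n) = X^n + Σ_{k=2}^n Σ_{j=1}^k ((−1)^j/j!) Σ_{k_1,…,k_j ≥ 2, k_1+⋯+k_j = k} (n!/((n−k)! k_1!⋯k_j!)) κ(X^{k_1})⋯κ(X^{k_j}) X^{n−k}. -/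
open Polynomial

/-- The convolution product of two linear functionals on `ℝ[X]`, determined on the
monomial basis by `(φ∗ψ)(X^n) = Σ_{k=0}^n (n choose k) φ(X^k) ψ(X^{n−k})`. -/
noncomputable def conv (φ ψ : Polynomial ℝ →ₗ[ℝ] ℝ) : Polynomial ℝ →ₗ[ℝ] ℝ :=
  (Polynomial.basisMonomials ℝ).constr ℝ fun n =>
    ∑ k ∈ Finset.range (n + 1), (n.choose k : ℝ) * φ (X ^ k) * ψ (X ^ (n - k))

/-- The counit `ε`, with `ε(X^n) = δ_{n,0}`. -/
noncomputable def counit : Polynomial ℝ →ₗ[ℝ] ℝ := Polynomial.lcoeff ℝ 0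

/-- The `k`-fold convolution power `θ^{∗k}`, with `θ^{∗0} = ε`. -/
noncomputable def convPow (φ : Polynomial ℝ →ₗ[ℝ] ℝ) : ℕ → (Polynomial ℝ →ₗ[ℝ] ℝ)
  | 0 => counit
  | k + 1 => conv φ (convPow φ k)

/-- The convolution logarithm `log_∗(μ) = Σ_{k≥1} ((−1)^{k+1}/k)(μ−ε)^{∗k}`,
a finite sum on each `X^n`. -/
noncomputable def logStar (μ : Polynomial ℝ →ₗ[ℝ] ℝ) : Polynomial ℝ →ₗ[ℝ] ℝ :=
  (Polynomial.basisMonomials ℝ).constr ℝ fun n =>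
    ∑ k ∈ Finset.Icc 1 n, ((-1 : ℝ) ^ (k + 1) / k) * convPow (μ - counit) k (X ^ n)

/-- The set of ordered `j`-tuples `(k_1,…,k_j)` of integers `≥ 2` with `k_1+⋯+k_j = k`. -/
noncomputable def tuples2 (j k : ℕ) : Finset (Fin j → ℕ) :=
  (Fintype.piFinset fun _ => Finset.Icc 2 k).filter fun f => ∑ i, f i = k

/-!
Passing to exponential generating functions turns convolution of functionals into multiplication
of power series and `log_∗` into the logarithm, so with `M` the generating function of `μ` and
`L = log M` that of `κ`, the generating function of `μ⁻¹` is `M⁻¹ = exp (-L)`. The Wick map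
formula is the expansion of `exp (-L)`, in which only parts `≥ 2` contribute since `L = O(X²)`.
-/

open scoped PowerSeries

section PowerSeries

theorem coeff_subst_eq_sum_range {R S : Type*} [CommRing R] [CommRing S] [Algebra R S]
    (f : R⟦X⟧) {g : S⟦X⟧} (hg : PowerSeries.constantCoeff g = 0) (n : ℕ) :
    PowerSeries.coeff n (f.subst g) =
      ∑ d ∈ Finset.range (n + 1), PowerSeries.coeff d f • PowerSeries.coeff n (g ^ d) := by
  rw [PowerSeries.coeff_subst' (.of_constantCoeff_zero' hg)]
  refine finsum_eq_sum_of_support_subset _ fun d hd => ?_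
  by_contra hdn
  have hlt : n < d := by simpa using hdn
  have hdvd : (PowerSeries.X : S⟦X⟧) ^ d ∣ g ^ d :=
    pow_dvd_pow_of_dvd (PowerSeries.X_dvd_iff.mpr hg) d
  exact hd (by simp [PowerSeries.X_pow_dvd_iff.mp hdvd n hlt])

theorem coeff_subst_eq_sum_Icc {R S : Type*} [CommRing R] [CommRing S] [Algebra R S]
    (f : R⟦X⟧) {g : S⟦X⟧} (hg : PowerSeries.constantCoeff g = 0) (n : ℕ) :
    PowerSeries.coeff n (f.subst g) = PowerSeries.coeff 0 f • PowerSeries.coeff n 1 +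
      ∑ d ∈ Finset.Icc 1 n, PowerSeries.coeff d f • PowerSeries.coeff n (g ^ d) := by
  rw [coeff_subst_eq_sum_range f hg, Finset.range_eq_Ico,
    Finset.sum_eq_sum_Ico_succ_bot n.add_one_pos, pow_zero, zero_add,
    ← Finset.Ico_add_one_right_eq_Icc]

theorem coeff_pow_eq_sum_piAntidiag {R : Type*} [CommSemiring R] (f : R⟦X⟧) (j k : ℕ) :
    PowerSeries.coeff k (f ^ j) =
      ∑ t ∈ Finset.piAntidiag (Finset.univ : Finset (Fin j)) k,
        ∏ i, PowerSeries.coeff (t i) f := by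
  have hpow : f ^ j = ∏ _i : Fin j, f := by simp
  rw [hpow, PowerSeries.coeff_prod]
  exact Finset.sum_equiv Finsupp.equivFunOnFinite (by simp) (by simp)

theorem tuples2_eq_filter_piAntidiag (j k : ℕ) :
    tuples2 j k = {t ∈ Finset.piAntidiag (Finset.univ : Finset (Fin j)) k | ∀ i, 2 ≤ t i} := by
  ext t
  simp only [tuples2, Finset.mem_filter, Fintype.mem_piFinset, Finset.mem_Icc,
    Finset.mem_piAntidiag, Finset.mem_univ, implies_true, and_true]
  constructor
  · rintro ⟨hbounds, hsum⟩
    exact ⟨hsum, fun i => (hbounds i).1⟩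
  · rintro ⟨rfl, htwo⟩
    exact ⟨fun i => ⟨htwo i, Finset.single_le_sum_of_canonicallyOrdered (Finset.mem_univ i)⟩, rfl⟩

theorem coeff_pow_eq_sum_tuples2 {R : Type*} [CommSemiring R] {f : R⟦X⟧}
    (h0 : PowerSeries.coeff 0 f = 0) (h1 : PowerSeries.coeff 1 f = 0) (j k : ℕ) :
    PowerSeries.coeff k (f ^ j) = ∑ t ∈ tuples2 j k, ∏ i, PowerSeries.coeff (t i) f := by
  rw [coeff_pow_eq_sum_piAntidiag, tuples2_eq_filter_piAntidiag, Finset.sum_filter_of_ne]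
  intro t _ hprod i
  by_contra! hlt
  refine hprod (Finset.prod_eq_zero (Finset.mem_univ i) ?_)
  interval_cases t i <;> assumption

variable {A : Type*} [CommRing A] [Algebra ℚ A]

theorem one_add_X_mul_derivative_log :
    (1 + PowerSeries.X) * d⁄dX A (PowerSeries.log A) = 1 := by
  rw [PowerSeries.deriv_log]
  ext n
  cases n <;> simp [add_mul, PowerSeries.coeff_succ_X_mul, PowerSeries.coeff_one, pow_succ]

theorem mul_derivative_logOf {M : A⟦X⟧} (hM : PowerSeries.constantCoeff M = 1) :
    M * d⁄dX A (PowerSeries.logOf M) = d⁄dX A M := by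
  have hsubst : PowerSeries.HasSubst (M - 1) := .of_constantCoeff_zero' (by simp [hM])
  have hlog : M * (d⁄dX A (PowerSeries.log A)).subst (M - 1) = 1 := by
    have h := congrArg (PowerSeries.substAlgHom hsubst) (one_add_X_mul_derivative_log (A := A))
    rwa [map_mul, map_add, map_one, PowerSeries.substAlgHom_X, add_sub_cancel,
      PowerSeries.coe_substAlgHom] at h
  rw [PowerSeries.logOf_eq, PowerSeries.derivative_subst hsubst, ← mul_assoc, hlog, one_mul,
    map_sub, PowerSeries.derivative_one, sub_zero]

theorem coeff_one_logOf {M : A⟦X⟧} (hM : PowerSeries.constantCoeff M = 1) :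
    PowerSeries.coeff 1 (PowerSeries.logOf M) = PowerSeries.coeff 1 M := by
  have h := congrArg PowerSeries.constantCoeff (mul_derivative_logOf hM)
  rw [map_mul, hM, one_mul] at h
  simpa only [← PowerSeries.coeff_zero_eq_constantCoeff_apply, PowerSeries.coeff_derivative,
    Nat.cast_zero, zero_add, mul_one] using h

theorem mul_exp_subst_neg_logOf {M : A⟦X⟧} (hM : PowerSeries.constantCoeff M = 1) :
    M * (PowerSeries.exp A).subst (-PowerSeries.logOf M) = 1 := by
  have hL : PowerSeries.constantCoeff (-PowerSeries.logOf M) = 0 := by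
    rw [map_neg, PowerSeries.constantCoeff_logOf hM, neg_zero]
  have : IsAddTorsionFree A := .of_module_rat A
  -- The derivative of `M * exp (-log M)` vanishes because `M * (log M)' = M'`.
  apply PowerSeries.derivative.ext
  · rw [Derivation.leibniz, PowerSeries.derivative_subst (.of_constantCoeff_zero' hL),
      PowerSeries.derivative_exp, map_neg, ← mul_derivative_logOf hM, PowerSeries.derivative_one]
    simp only [smul_eq_mul]
    ring
  · rw [map_mul, hM, one_mul, ← PowerSeries.coeff_zero_eq_constantCoeff_apply,
      coeff_subst_eq_sum_range _ hL]
    simp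

theorem coeff_eq_sum_tuples2_of_mul_eq_one {M N : A⟦X⟧} (hMN : M * N = 1)
    (h0 : PowerSeries.constantCoeff M = 1) (h1 : PowerSeries.coeff 1 M = 0)
    {k : ℕ} (hk : k ≠ 0) :
    PowerSeries.coeff k N = ∑ j ∈ Finset.Icc 1 k, ((-1 : ℚ) ^ j / j.factorial) •
      ∑ t ∈ tuples2 j k, ∏ i, PowerSeries.coeff (t i) (PowerSeries.logOf M) := by
  have hL : PowerSeries.constantCoeff (PowerSeries.logOf M) = 0 :=
    PowerSeries.constantCoeff_logOf h0
  have hN : N = (PowerSeries.exp A).subst (-PowerSeries.logOf M) :=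
    left_inv_eq_right_inv (by rw [mul_comm, hMN]) (mul_exp_subst_neg_logOf h0)
  rw [hN, coeff_subst_eq_sum_Icc _ (by rw [map_neg, hL, neg_zero]), PowerSeries.coeff_one,
    if_neg hk, smul_zero, zero_add]
  refine Finset.sum_congr rfl fun j _ => ?_
  have hsign : (-1 : A⟦X⟧) ^ j = PowerSeries.C (algebraMap ℚ A ((-1) ^ j)) := by simp
  rw [← coeff_pow_eq_sum_tuples2 (by simpa using hL) (by rw [coeff_one_logOf h0, h1]), neg_pow,
    hsign, PowerSeries.coeff_C_mul, PowerSeries.coeff_exp, smul_eq_mul, ← mul_assoc,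
    Algebra.smul_def]
  congr 1
  rw [← map_mul, one_div_mul_eq_div]

end PowerSeries

section Functionals

variable (φ ψ : ℝ[X] →ₗ[ℝ] ℝ)

theorem constr_basisMonomials_X_pow {R M : Type*} [CommSemiring R] [AddCommMonoid M] [Module R M]
    (g : ℕ → M) (n : ℕ) : (basisMonomials R).constr R g (X ^ n) = g n := by
  have hX : (X ^ n : R[X]) = basisMonomials R n := by simp [X_pow_eq_monomial]
  rw [hX, Module.Basis.constr_basis]

theorem conv_X_pow (n : ℕ) :
    conv φ ψ (X ^ n) =
      ∑ k ∈ Finset.range (n + 1), (n.choose k : ℝ) * φ (X ^ k) * ψ (X ^ (n - k)) :=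
  constr_basisMonomials_X_pow _ n

theorem counit_X_pow (n : ℕ) : counit (X ^ n) = if n = 0 then 1 else 0 := by
  simp [counit, coeff_X_pow, eq_comm]

theorem logStar_X_pow (n : ℕ) :
    logStar φ (X ^ n) =
      ∑ k ∈ Finset.Icc 1 n, ((-1 : ℝ) ^ (k + 1) / k) * convPow (φ - counit) k (X ^ n) :=
  constr_basisMonomials_X_pow _ n

/-- The exponential generating function `∑ φ(X^n) / n! · X^n` of the moments of a functional `φ`
on `ℝ[X]`, as a linear map in `φ`. -/
noncomputable def egf : (ℝ[X] →ₗ[ℝ] ℝ) →ₗ[ℝ] ℝ⟦X⟧ where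
  toFun φ := PowerSeries.mk fun n => φ (X ^ n) / n.factorial
  map_add' φ ψ := by ext n; simp [add_div]
  map_smul' c φ := by ext n; simp [mul_div_assoc]

theorem coeff_egf (n : ℕ) : PowerSeries.coeff n (egf φ) = φ (X ^ n) / n.factorial :=
  PowerSeries.coeff_mk n fun m => φ (X ^ m) / m.factorial

theorem constantCoeff_egf : PowerSeries.constantCoeff (egf φ) = φ 1 := by
  rw [← PowerSeries.coeff_zero_eq_constantCoeff_apply, coeff_egf]
  simp

theorem egf_conv : egf (conv φ ψ) = egf φ * egf ψ := by
  ext n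
  rw [PowerSeries.coeff_mul, Finset.Nat.sum_antidiagonal_eq_sum_range_succ_mk, coeff_egf,
    conv_X_pow, Finset.sum_div]
  refine Finset.sum_congr rfl fun k hk => ?_
  rw [coeff_egf, coeff_egf, Nat.cast_choose ℝ (Finset.mem_range_succ_iff.mp hk)]
  field_simp

theorem egf_counit : egf counit = 1 := by
  ext n
  rw [coeff_egf, counit_X_pow, PowerSeries.coeff_one]
  split_ifs with hn <;> simp [hn]

theorem egf_convPow (k : ℕ) : egf (convPow φ k) = egf φ ^ k := by
  induction k with
  | zero => rw [convPow, egf_counit, pow_zero]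
  | succ k ih => rw [convPow, egf_conv, ih, pow_succ']

variable {φ ψ}

theorem egf_logStar (h1 : φ 1 = 1) : egf (logStar φ) = PowerSeries.logOf (egf φ) := by
  have hc : PowerSeries.constantCoeff (egf φ - 1) = 0 := by
    rw [map_sub, constantCoeff_egf, h1, map_one, sub_self]
  ext n
  rw [PowerSeries.logOf_eq, coeff_subst_eq_sum_Icc _ hc, coeff_egf, logStar_X_pow,
    Finset.sum_div, PowerSeries.coeff_log, if_pos rfl, zero_smul, zero_add]
  refine Finset.sum_congr rfl fun k hk => ?_
  have hk0 : k ≠ 0 := Nat.ne_of_gt (Finset.mem_Icc.mp hk).1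
  rw [← egf_counit, ← map_sub, ← egf_convPow, coeff_egf, PowerSeries.coeff_log, if_neg hk0]
  simp [mul_div_assoc]

theorem apply_one_of_conv_eq_counit (h1 : φ 1 = 1) (hφψ : conv φ ψ = counit) : ψ 1 = 1 := by
  have h := DFunLike.congr_fun hφψ (X ^ 0)
  rw [conv_X_pow, counit_X_pow] at h
  simpa [h1] using h

theorem apply_X_of_conv_eq_counit (h1 : φ 1 = 1) (hX : φ X = 0) (hφψ : conv φ ψ = counit) :
    ψ X = 0 := by
  have h := DFunLike.congr_fun hφψ (X ^ 1)
  rw [conv_X_pow, counit_X_pow] at h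
  simpa [Finset.sum_range_succ, h1, hX] using h

theorem apply_X_pow_div_factorial_of_conv_eq_counit (h1 : φ 1 = 1) (hX : φ X = 0)
    (hφψ : conv φ ψ = counit) {k : ℕ} (hk : k ≠ 0) :
    ψ (X ^ k) / k.factorial = ∑ j ∈ Finset.Icc 1 k, ((-1 : ℝ) ^ j / j.factorial) *
      ∑ t ∈ tuples2 j k, ∏ i, (logStar φ (X ^ t i) / (t i).factorial) := by
  have hmul : egf φ * egf ψ = 1 := by rw [← egf_conv, hφψ, egf_counit]
  have h := coeff_eq_sum_tuples2_of_mul_eq_one hmul (by rw [constantCoeff_egf, h1])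
    (by simp [coeff_egf, hX]) hk
  simpa [← egf_logStar h1, coeff_egf, Rat.smul_def] using h

theorem choose_mul_apply_X_pow_of_conv_eq_counit (h1 : φ 1 = 1) (hX : φ X = 0)
    (hφψ : conv φ ψ = counit) {k n : ℕ} (hk : k ≠ 0) (hkn : k ≤ n) :
    (n.choose k : ℝ) * ψ (X ^ k) = ∑ j ∈ Finset.Icc 1 k, ((-1 : ℝ) ^ j / j.factorial) *
      ∑ t ∈ tuples2 j k,
        ((n.factorial : ℝ) / (((n - k).factorial : ℝ) * ∏ i, ((t i).factorial : ℝ))) *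
          ∏ i, logStar φ (X ^ t i) := by
  calc (n.choose k : ℝ) * ψ (X ^ k)
      = n.factorial / (n - k).factorial * (ψ (X ^ k) / k.factorial) := by
        rw [Nat.cast_choose ℝ hkn]
        field_simp
    _ = _ := by
        rw [apply_X_pow_div_factorial_of_conv_eq_counit h1 hX hφψ hk, Finset.mul_sum]
        refine Finset.sum_congr rfl fun j _ => ?_
        rw [mul_left_comm, Finset.mul_sum]
        congr! 2 with t
        rw [Finset.prod_div_distrib, div_mul_div_comm, div_mul_eq_mul_div]

end Functionals

/-- Let `μ` be linear with `μ(1) = 1`, `μ(X) = 0`, convolution inverse `μ⁻¹`, and set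
`κ = log_∗ μ`. The Wick map `W(X^n) = Σ_{k=0}^n (n choose k) μ⁻¹(X^k) X^{n−k}` satisfies
`W(X^n) = X^n + Σ_{k=2}^n Σ_{j=1}^k ((−1)^j/j!) Σ_{k_1,…,k_j ≥ 2, k_1+⋯+k_j = k}
(n!/((n−k)! k_1!⋯k_j!)) κ(X^{k_1})⋯κ(X^{k_j}) X^{n−k}`. -/
theorem stmt_7 (μ μinv : Polynomial ℝ →ₗ[ℝ] ℝ) (h1 : μ 1 = 1) (hX : μ X = 0)
    (hr : conv μ μinv = counit) (hl : conv μinv μ = counit) :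
    ∀ n : ℕ,
      ∑ k ∈ Finset.range (n + 1), ((n.choose k : ℝ) * μinv (X ^ k)) • (X ^ (n - k) : Polynomial ℝ) =
      (X ^ n : Polynomial ℝ) + ∑ k ∈ Finset.Icc 2 n, ∑ j ∈ Finset.Icc 1 k,
        (((-1 : ℝ) ^ j / j.factorial) *
          ∑ f ∈ tuples2 j k,
            ((n.factorial : ℝ) / (((n - k).factorial : ℝ) * ∏ i, ((f i).factorial : ℝ))) *
              ∏ i, logStar μ (X ^ f i)) • X ^ (n - k) := by
  intro n
  have hsub : insert 0 (Finset.Icc 2 n) ⊆ Finset.range (n + 1) := by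
    intro k
    simp only [Finset.mem_insert, Finset.mem_Icc, Finset.mem_range]
    omega
  rw [← Finset.sum_subset hsub, Finset.sum_insert (by simp)]
  · congr 1
    · simp [apply_one_of_conv_eq_counit h1 hr]
    · refine Finset.sum_congr rfl fun k hk => ?_
      obtain ⟨hk2, hkn⟩ := Finset.mem_Icc.mp hk
      rw [← Finset.sum_smul,
        choose_mul_apply_X_pow_of_conv_eq_counit h1 hX hr (by omega) hkn]
  · intro k hk hk_notMem
    obtain rfl : k = 1 := by
      simp only [Finset.mem_insert, Finset.mem_Icc, Finset.mem_range] at hk hk_notMem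
      omega
    simp [apply_X_of_conv_eq_counit h1 hX hr]
end

section
/- For every n ≥ 1 and commuting indeterminates X, Y_2, …, Y_n, the following identity of polynomials holds: X^n + n! Σ_{k=2}^n Σ_{j=1}^k ((−1)^j/j!) Σ_{k_1,…,k_j ≥ 2, k_1+⋯+k_j = k} (Y_{k_1}/k_1!)⋯(Y_{k_j}/k_j!) · X^{n−k}/(n−k)! = n! Σ_{j_1,…,j_n ≥ 0, j_1+2j_2+⋯+nj_n = n} (X^{j_1}/j_1!) ∏_{p=2}^n (1/j_p!)(−Y_p/p!)^{j_p}. The right-hand side is the complete exponential Bell polynomial B_n(X, −Y_2, …, −Y_n). -/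
/-- The index set of the complete Bell polynomial: tuples `(j_1,…,j_n)` of nonnegative
integers with `j_1 + 2j_2 + ⋯ + nj_n = n`, encoded as `j : Fin n → ℕ` where `j i`
stands for `j_{i+1}`. -/
noncomputable def bellIdx (n : ℕ) : Finset (Fin n → ℕ) :=
  (Fintype.piFinset fun _ => Finset.range (n + 1)).filter fun j =>
    ∑ i : Fin n, ((i : ℕ) + 1) * j i = n

/-!
Write `y₁ = X` and `y_p = -Y_p / p!` for `p ≥ 2`. In a monomial of the Bell polynomial, split off
the exponent of `X`: if the remaining exponents have weight `k`, it is `n - k`. The remaining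
exponents `c` are the multiplicities of the values of an ordered tuple of integers `≥ 2` with
sum `k`; exactly `j! / ∏ (c i)!` tuples of length `j` have these multiplicities, which turns the
weights `1 / (c i)!` into the single weight `1 / j!`. This count is the multinomial theorem,
refined by weight by comparing coefficients in `(∑ y_p T ^ p) ^ j`.
-/

open Finset
open scoped Nat

section WeightedMultinomial

open Polynomial

variable {ι R : Type*} [CommSemiring R] (s : Finset ι) (w : ι → ℕ) (y : ι → R) (j k : ℕ)

theorem coeff_sum_monomial_pow_eq_sum_piFinset :
    ((∑ i ∈ s, monomial (w i) (y i)) ^ j).coeff k =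
      ∑ f ∈ Fintype.piFinset (fun _ : Fin j ↦ s) with ∑ a, w (f a) = k, ∏ a, y (f a) := by
  simp only [sum_pow', finsetSum_coeff, ← C_mul_X_pow_eq_monomial, prod_mul_distrib,
    prod_pow_eq_pow_sum, ← map_prod, coeff_C_mul_X_pow, sum_filter, eq_comm]

theorem coeff_sum_monomial_pow_eq_sum_piAntidiag [DecidableEq ι] :
    ((∑ i ∈ s, monomial (w i) (y i)) ^ j).coeff k =
      ∑ c ∈ s.piAntidiag j with ∑ i ∈ s, w i * c i = k,
        Nat.multinomial s c * ∏ i ∈ s, y i ^ c i := by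
  simp only [sum_pow_eq_sum_piAntidiag, finsetSum_coeff, ← C_mul_X_pow_eq_monomial, mul_pow,
    ← pow_mul, prod_mul_distrib, prod_pow_eq_pow_sum, ← map_pow, ← map_prod, ← C_eq_natCast,
    coeff_C_mul, coeff_X_pow, sum_filter, mul_ite, mul_one, mul_zero, eq_comm]

end WeightedMultinomial

theorem inv_factorial_mul_multinomial {ι K : Type*} [Semifield K] [CharZero K] (s : Finset ι)
    (c : ι → ℕ) :
    (((∑ i ∈ s, c i)! : K))⁻¹ * Nat.multinomial s c = ∏ i ∈ s, ((c i)! : K)⁻¹ := by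
  have multinomial_ne_zero : (Nat.multinomial s c : K) ≠ 0 :=
    Nat.cast_ne_zero.2 (Nat.multinomial_pos s c).ne'
  rw [← Nat.multinomial_spec s c, Nat.cast_mul, mul_inv, mul_assoc,
    inv_mul_cancel₀ multinomial_ne_zero, mul_one, Nat.cast_prod, prod_inv_distrib]

theorem mem_tuples2 {j k : ℕ} {f : Fin j → ℕ} :
    f ∈ tuples2 j k ↔ (∀ a, 2 ≤ f a) ∧ ∑ a, f a = k := by
  simp only [tuples2, mem_filter, Fintype.mem_piFinset, mem_Icc]
  refine and_congr_left fun hf ↦ forall_congr' fun a ↦ and_iff_left ?_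
  exact hf ▸ single_le_sum_of_canonicallyOrdered (mem_univ a)

theorem tuples2_eq_filter_piFinset {j k n : ℕ} (hk : k ≤ n) :
    tuples2 j k = {f ∈ Fintype.piFinset fun _ : Fin j ↦ Icc 2 n | ∑ a, f a = k} := by
  ext f
  simp only [mem_tuples2, mem_filter, Fintype.mem_piFinset, mem_Icc]
  refine and_congr_left fun hf ↦ forall_congr' fun a ↦ (and_iff_left ?_).symm
  exact (hf ▸ single_le_sum_of_canonicallyOrdered (mem_univ a) : f a ≤ k).trans hk

theorem two_mul_le_of_mem_tuples2 {j k : ℕ} {f : Fin j → ℕ} (hf : f ∈ tuples2 j k) :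
    2 * j ≤ k := by
  obtain ⟨two_le, rfl⟩ := mem_tuples2.1 hf
  simpa [mul_comm] using card_nsmul_le_sum univ f 2 fun a _ ↦ two_le a

theorem mem_bellIdx {n : ℕ} {c : Fin n → ℕ} :
    c ∈ bellIdx n ↔ ∑ i : Fin n, ((i : ℕ) + 1) * c i = n := by
  simp only [bellIdx, mem_filter, Fintype.mem_piFinset, mem_range, and_iff_right_iff_imp]
  intro hc i
  calc c i ≤ ((i : ℕ) + 1) * c i := Nat.le_mul_of_pos_left _ i.succ_pos
    _ ≤ ∑ i : Fin n, ((i : ℕ) + 1) * c i :=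
      single_le_sum_of_canonicallyOrdered (f := fun i : Fin n ↦ ((i : ℕ) + 1) * c i) (mem_univ i)
    _ < n + 1 := by omega

theorem tuples2_zero_left_eq_empty {k : ℕ} (hk : k ≠ 0) : tuples2 0 k = ∅ := by
  ext f
  simp [mem_tuples2, hk.symm]

theorem sum_tuples2_zero_zero {M : Type*} [AddCommMonoid M] (G : (Fin 0 → ℕ) → M) :
    ∑ f ∈ tuples2 0 0, G f = G ![] := by
  simp [tuples2, Matrix.empty_eq]

theorem sum_sum_tuples2_eq_add_sum_Icc {M : Type*} [AddCommMonoid M] (n : ℕ)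
    (G : ℕ → ∀ j, (Fin j → ℕ) → M) :
    ∑ k ∈ range (n + 1), ∑ j ∈ range (k + 1), ∑ f ∈ tuples2 j k, G k j f =
      G 0 0 ![] + ∑ k ∈ Icc 2 n, ∑ j ∈ Icc 1 k, ∑ f ∈ tuples2 j k, G k j f := by
  have drop_length_zero (k : ℕ) (hk : k ≠ 0) : ∑ j ∈ range (k + 1), ∑ f ∈ tuples2 j k, G k j f =
      ∑ j ∈ Icc 1 k, ∑ f ∈ tuples2 j k, G k j f := by
    rw [range_eq_Ico, sum_eq_sum_Ico_succ_bot k.add_one_pos, tuples2_zero_left_eq_empty hk,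
      sum_empty, zero_add, zero_add, Ico_add_one_right_eq_Icc]
  have drop_sum_one : ∑ k ∈ Icc 1 n, ∑ j ∈ Icc 1 k, ∑ f ∈ tuples2 j k, G k j f =
      ∑ k ∈ Icc 2 n, ∑ j ∈ Icc 1 k, ∑ f ∈ tuples2 j k, G k j f := by
    refine (sum_subset (Icc_subset_Icc_left one_le_two) fun k hk hk2 ↦
      sum_eq_zero fun j hj ↦ sum_eq_zero fun f hf ↦ ?_).symm
    have := two_mul_le_of_mem_tuples2 hf
    simp only [mem_Icc] at hk hk2 hj
    omega
  rw [range_eq_Ico, sum_eq_sum_Ico_succ_bot n.add_one_pos, sum_range_one, sum_tuples2_zero_zero,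
    zero_add, Ico_add_one_right_eq_Icc, ← drop_sum_one]
  exact congrArg _ <| sum_congr rfl fun k hk ↦
    drop_length_zero k (Nat.one_le_iff_ne_zero.1 (mem_Icc.1 hk).1)

theorem sum_bellIdx_succ {M : Type*} [AddCommMonoid M] (m : ℕ) (F : (Fin (m + 1) → ℕ) → M) :
    ∑ c ∈ bellIdx (m + 1), F c =
      ∑ k ∈ range (m + 2), ∑ j ∈ range (k + 1),
        ∑ c ∈ (univ : Finset (Fin m)).piAntidiag j with ∑ i : Fin m, ((i : ℕ) + 2) * c i = k,
          F (Fin.cons (m + 1 - k) c) := by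
  have length_le_weight (c : Fin m → ℕ) : ∑ i, c i ≤ ∑ i : Fin m, ((i : ℕ) + 2) * c i :=
    sum_le_sum fun i _ ↦ Nat.le_mul_of_pos_left _ (by omega)
  have weight_cons (c : Fin (m + 1) → ℕ) : c ∈ bellIdx (m + 1) ↔
      c 0 + ∑ i : Fin m, ((i : ℕ) + 2) * Fin.tail c i = m + 1 := by
    simp [mem_bellIdx, Fin.sum_univ_succ, Fin.tail, add_assoc]
  have cons_tail {c : Fin (m + 1) → ℕ} (hc : c ∈ bellIdx (m + 1)) :
      (Fin.cons (m + 1 - (m + 1 - c 0)) (Fin.tail c) : Fin (m + 1) → ℕ) = c := by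
    rw [weight_cons] at hc
    rw [show m + 1 - (m + 1 - c 0) = c 0 by omega, Fin.cons_self_tail]
  simp only [sum_sigma']
  refine sum_bij' (fun c _ ↦ ⟨m + 1 - c 0, ∑ i, Fin.tail c i, Fin.tail c⟩)
    (fun p _ ↦ Fin.cons (m + 1 - p.1) p.2.2) ?_ ?_ ?_ ?_ ?_
  · intro c hc
    have := length_le_weight (Fin.tail c)
    simp only [weight_cons] at hc
    simp only [mem_sigma, mem_range, mem_filter, mem_piAntidiag, mem_univ, implies_true, and_true,
      true_and]
    omega
  · rintro ⟨k, j, c⟩ hp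
    simp only [mem_sigma, mem_range, mem_filter] at hp
    simp only [weight_cons, Fin.cons_zero, Fin.tail_cons]
    omega
  · exact fun c hc ↦ cons_tail hc
  · rintro ⟨k, j, c⟩ hp
    simp only [mem_sigma, mem_range, mem_filter, mem_piAntidiag] at hp
    obtain ⟨hk, -, ⟨rfl, -⟩, -⟩ := hp
    simp only [Fin.cons_zero, Fin.tail_cons, Sigma.mk.injEq, heq_eq_eq, and_true]
    omega
  · exact fun c hc ↦ congrArg F (cons_tail hc).symm

section Bell

variable {K R : Type*} [Semifield K] [CharZero K] [CommSemiring R] [Algebra K R]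

theorem inv_factorial_smul_sum_tuples2 {j k m : ℕ} (hk : k ≤ m + 1) (y : ℕ → R) :
    ((j ! : K)⁻¹) • ∑ f ∈ tuples2 j k, ∏ a, y (f a) =
      ∑ c ∈ (univ : Finset (Fin m)).piAntidiag j with ∑ i : Fin m, ((i : ℕ) + 2) * c i = k,
        (∏ i, ((c i)! : K)⁻¹) • ∏ i : Fin m, y (i + 2) ^ c i := by
  have reindex : ∑ p ∈ Icc 2 (m + 1), Polynomial.monomial p (y p) =
      ∑ i : Fin m, Polynomial.monomial ((i : ℕ) + 2) (y (i + 2)) := by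
    rw [Fin.sum_univ_eq_sum_range fun i ↦ Polynomial.monomial (i + 2) (y (i + 2)), range_eq_Ico,
      sum_Ico_add' (fun p ↦ Polynomial.monomial p (y p)), zero_add,
      show m + 2 = m + 1 + 1 from rfl, Ico_add_one_right_eq_Icc]
  rw [tuples2_eq_filter_piFinset hk, ← coeff_sum_monomial_pow_eq_sum_piFinset _ fun p ↦ p, reindex,
    coeff_sum_monomial_pow_eq_sum_piAntidiag _ fun i : Fin m ↦ (i : ℕ) + 2, smul_sum]
  refine sum_congr rfl fun c hc ↦ ?_
  obtain ⟨rfl, -⟩ := mem_piAntidiag.1 (mem_filter.1 hc).1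
  rw [← inv_factorial_mul_multinomial, mul_smul, Nat.cast_smul_eq_nsmul, nsmul_eq_mul]

theorem sum_bellIdx_eq_sum_tuples2 (n : ℕ) (y : ℕ → R) :
    ∑ c ∈ bellIdx n, (∏ i, ((c i)! : K)⁻¹) • ∏ i : Fin n, y (i + 1) ^ c i =
      ∑ k ∈ range (n + 1), ∑ j ∈ range (k + 1), ∑ f ∈ tuples2 j k,
        (((n - k)! : K)⁻¹ * (j ! : K)⁻¹) • (y 1 ^ (n - k) * ∏ a, y (f a)) := by
  obtain _ | m := n
  · simp [bellIdx, tuples2]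
  rw [sum_bellIdx_succ]
  refine sum_congr rfl fun k hk ↦ sum_congr rfl fun j _ ↦ ?_
  have hk : k ≤ m + 1 := mem_range_succ_iff.1 hk
  calc
    _ = ((m + 1 - k)! : K)⁻¹ • (y 1 ^ (m + 1 - k) *
          ∑ c ∈ (univ : Finset (Fin m)).piAntidiag j with ∑ i : Fin m, ((i : ℕ) + 2) * c i = k,
            (∏ i, ((c i)! : K)⁻¹) • ∏ i : Fin m, y (i + 2) ^ c i) := by
      simp only [Fin.prod_univ_succ, Fin.cons_zero, Fin.cons_succ, Fin.val_zero, Fin.val_succ,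
        zero_add, add_assoc, one_add_one_eq_two, mul_sum, smul_sum, mul_smul, mul_smul_comm]
    _ = _ := by
      simp only [← inv_factorial_smul_sum_tuples2 hk, mul_sum, smul_sum, mul_smul, mul_smul_comm]

end Bell

section SignedBell

variable {K R : Type*} [Field K] [CommSemiring R] [Algebra K R]

/-- The scalar `a_p` with `a_1 X = X` and `a_p Y_p = -Y_p / p!` for `p ≥ 2`, so that the products
`a_p x_p` are the variables of `B_n(X, -Y_2, …, -Y_n)` divided by the factorials of their indices.
`a_0` is a junk value. -/
noncomputable def bellCoeff (K : Type*) [Field K] (p : ℕ) : K :=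
  if p = 1 then 1 else -(p ! : K)⁻¹

theorem prod_bellCoeff_smul_pow {n : ℕ} (x : ℕ → R) (c : Fin n → ℕ) :
    (∏ i, ((c i)! : K)⁻¹) • ∏ i : Fin n, (bellCoeff K (i + 1) • x (i + 1)) ^ c i =
      (∏ i : Fin n, (((c i)! : K)⁻¹ *
          (if (i : ℕ) = 0 then 1 else (-((((i : ℕ) + 1)! : K))⁻¹) ^ (c i)))) •
        ∏ i : Fin n, x ((i : ℕ) + 1) ^ (c i) := by
  simp only [smul_pow, prod_smul, smul_smul, prod_mul_distrib, bellCoeff, Nat.add_eq_right,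
    ite_pow, one_pow]

theorem prod_bellCoeff_smul_of_mem_tuples2 {j k : ℕ} (x : ℕ → R) {f : Fin j → ℕ}
    (hf : f ∈ tuples2 j k) :
    ∏ a, bellCoeff K (f a) • x (f a) =
      ((-1) ^ j * ∏ a, ((f a)! : K)⁻¹) • ∏ a, x (f a) := by
  have ne_one (a : Fin j) : f a ≠ 1 := Nat.ne_of_gt ((mem_tuples2.1 hf).1 a)
  simp only [bellCoeff, ne_one, if_false, prod_smul, prod_neg, card_univ, Fintype.card_fin]

theorem stmt_11_general [CharZero K] (n : ℕ) (x : ℕ → R) :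
    x 1 ^ n +
      (n ! : K) •
        ∑ k ∈ Icc 2 n, ∑ j ∈ Icc 1 k, ∑ f ∈ tuples2 j k,
          (((-1 : K) ^ j / (j ! : K)) * ((n - k)! : K)⁻¹ * ∏ i, ((f i)! : K)⁻¹) •
            ((∏ i, x (f i)) * x 1 ^ (n - k)) =
    (n ! : K) •
      ∑ j ∈ bellIdx n,
        ((∏ i : Fin n, (((j i)! : K)⁻¹ *
            (if (i : ℕ) = 0 then 1 else (-((((i : ℕ) + 1)! : K))⁻¹) ^ (j i)))) •
          ∏ i : Fin n, x ((i : ℕ) + 1) ^ (j i)) := by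
  have n_factorial_ne_zero : (n ! : K) ≠ 0 := Nat.cast_ne_zero.2 n.factorial_ne_zero
  have tuple_term (k j : ℕ) : ∀ f ∈ tuples2 j k,
      (((n - k)! : K)⁻¹ * (j ! : K)⁻¹) •
          ((bellCoeff K 1 • x 1) ^ (n - k) * ∏ a, bellCoeff K (f a) • x (f a)) =
        ((-1 : K) ^ j / (j ! : K) * ((n - k)! : K)⁻¹ * ∏ a, ((f a)! : K)⁻¹) •
          ((∏ a, x (f a)) * x 1 ^ (n - k)) := by
    intro f hf
    rw [prod_bellCoeff_smul_of_mem_tuples2 x hf, bellCoeff, if_pos rfl, one_smul, mul_smul_comm,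
      smul_smul, mul_comm (x 1 ^ _)]
    congr 1
    ring
  simp only [← prod_bellCoeff_smul_pow]
  rw [sum_bellIdx_eq_sum_tuples2 n fun p ↦ bellCoeff K p • x p,
    sum_congr rfl fun k _ ↦ sum_congr rfl fun j _ ↦ sum_congr rfl (tuple_term k j),
    sum_sum_tuples2_eq_add_sum_Icc, smul_add]
  simp [n_factorial_ne_zero]

end SignedBell

/-- For every `n ≥ 1`:
`X^n + n! Σ_{k=2}^n Σ_{j=1}^k ((−1)^j/j!) Σ_{k_1,…,k_j ≥ 2, k_1+⋯+k_j=k}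
(Y_{k_1}/k_1!)⋯(Y_{k_j}/k_j!) · X^{n−k}/(n−k)!
= n! Σ_{j_1+2j_2+⋯+nj_n=n} (X^{j_1}/j_1!) ∏_{p=2}^n (1/j_p!)(−Y_p/p!)^{j_p}`,
the right-hand side being the complete exponential Bell polynomial `B_n(X,−Y_2,…,−Y_n)`. -/
theorem stmt_11 (n : ℕ) (hn : 1 ≤ n) :
    (MvPolynomial.X 1 : MvPolynomial ℕ ℝ) ^ n +
      (n.factorial : ℝ) •
        ∑ k ∈ Finset.Icc 2 n, ∑ j ∈ Finset.Icc 1 k, ∑ f ∈ tuples2 j k,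
          (((-1 : ℝ) ^ j / (j.factorial : ℝ)) * (((n - k).factorial : ℝ))⁻¹ *
              ∏ i, (((f i).factorial : ℝ))⁻¹) •
            ((∏ i, (MvPolynomial.X (f i) : MvPolynomial ℕ ℝ)) *
              (MvPolynomial.X 1 : MvPolynomial ℕ ℝ) ^ (n - k)) =
    (n.factorial : ℝ) •
      ∑ j ∈ bellIdx n,
        ((∏ i : Fin n, ((((j i).factorial : ℝ))⁻¹ *
            (if (i : ℕ) = 0 then 1 else (-((((i : ℕ) + 1).factorial : ℝ))⁻¹) ^ (j i)))) •
          ∏ i : Fin n, (MvPolynomial.X ((i : ℕ) + 1) : MvPolynomial ℕ ℝ) ^ (j i)) :=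
  stmt_11_general n MvPolynomial.X
end

section
/- Let d be a real number with d < 4, and let β : ℕ → ℕ be finitely supported with β(k) = 0 for k ∉ {2,3,4}, with β(3) even, and with β(2) + β(3) ≥ 1. If the degree deg(z^β) = d(β(2)+β(3)+β(4)−1) − ((d−2)/2)(2β(2)+3β(3)+4β(4)) is ≤ 0, then either β(2) = 1 and β(3) = 0 (so z^β = z_2 z_4^{β(4)}), or β(2) = 0 and β(3) = 2 (so z^β = z_3² z_4^{β(4)}). In other words, the only potentially divergent subdiagram multi-indices are z_2 z_4^{p−1} and z_3² z_4^{p−2}. -/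
/-!
Raising the dimension from `d` to `d'` lowers the degree of a multi-index by `(d' - d)` times the
loop number `1 + (Σ k β(k)) / 2 - |β|`, which is positive as soon as every vertex has arity at
least `2`. A multi-index that is divergent in some dimension `d < 4` therefore has negative degree
in dimension `4`. For `β` supported on `{2, 3, 4}` this reads `2 β(2) + β(3) < 4`, which for even
`β(3)` and `β(2) + β(3) ≥ 1` leaves only `(β(2), β(3)) = (1, 0)` and `(0, 2)`.
-/

/-- Multi-indices: `β` stands for the monomial `∏ₖ zₖ ^ β(k)`, that is, for a family of vertices of
which `β(k)` have arity `k`. -/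
abbrev MultiIndex := ℕ →₀ ℕ

namespace MultiIndex

/-- The length `|z^β| = Σ β(k)`, which is the number of vertices. -/
noncomputable def length (β : MultiIndex) : ℕ := Finsupp.degree β

/-- The number of half-edges `Σ k β(k)`. -/
noncomputable def halfEdges (β : MultiIndex) : ℕ := Finsupp.weight id β

/-- The degree of `z^β` in dimension `d`; the multi-index is divergent if it is nonpositive. -/
noncomputable def deg (d : ℝ) (β : MultiIndex) : ℝ :=
  d * (β.length - 1) - (d - 2) / 2 * β.halfEdges

/-- The number of independent cycles `1 + E - V` of a connected diagram with vertices `β`, in which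
all half-edges are paired, so that `E` is half the number of half-edges. Being defined for every
`β`, it takes values in `ℝ` and may be negative or a half-integer. -/
noncomputable def loopNumber (β : MultiIndex) : ℝ := 1 + β.halfEdges / 2 - β.length

variable {β : MultiIndex}

theorem mul_length_le_halfEdges {m : ℕ} (hm : ∀ k ∈ β.support, m ≤ k) :
    m * β.length ≤ β.halfEdges := by
  calc
    m * β.length = ∑ k ∈ β.support, m * β k := by
      rw [length, Finsupp.degree_apply, Finset.mul_sum]
    _ ≤ ∑ k ∈ β.support, k * β k := by
      gcongr with k hk
      exact hm k hk
    _ = β.halfEdges := by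
      simp only [halfEdges, Finsupp.weight_apply, Finsupp.sum, id_eq, smul_eq_mul, mul_comm]

theorem loopNumber_pos (hβ : ∀ k ∈ β.support, 2 ≤ k) : 0 < β.loopNumber := by
  have hle : (2 * β.length : ℝ) ≤ β.halfEdges := mod_cast mul_length_le_halfEdges hβ
  unfold loopNumber
  linarith

theorem deg_eq_deg_add (d d' : ℝ) (β : MultiIndex) :
    deg d β = deg d' β + (d' - d) * β.loopNumber := by
  unfold deg loopNumber
  ring

theorem strictAnti_deg (hβ : 0 < β.loopNumber) : StrictAnti fun d ↦ deg d β := fun d d' hd ↦ by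
  have hgap : 0 < (d' - d) * β.loopNumber := mul_pos (sub_pos.mpr hd) hβ
  simpa only [deg_eq_deg_add d d' β] using lt_add_of_pos_right (deg d' β) hgap

theorem deg_four_neg_iff : deg 4 β < 0 ↔ 4 * β.length < β.halfEdges + 4 := by
  rw [← Nat.cast_lt (α := ℝ)]
  push_cast
  unfold deg
  constructor <;> intro h <;> linarith

theorem length_of_support_subset (hβ : β.support ⊆ {2, 3, 4}) : β.length = β 2 + β 3 + β 4 := by
  rw [length, Finsupp.degree_apply, Finset.sum_subset hβ (by simp)]
  simp [add_assoc]

theorem halfEdges_of_support_subset (hβ : β.support ⊆ {2, 3, 4}) :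
    β.halfEdges = 2 * β 2 + 3 * β 3 + 4 * β 4 := by
  rw [halfEdges, Finsupp.weight_apply, Finsupp.sum_of_support_subset _ hβ _ (by simp)]
  simp [mul_comm, add_assoc]

theorem two_mul_add_lt_four_of_deg_nonpos {d : ℝ} (hd : d < 4) (hβ : β.support ⊆ {2, 3, 4})
    (hdeg : deg d β ≤ 0) : 2 * β 2 + β 3 < 4 := by
  have harity : ∀ k ∈ β.support, 2 ≤ k := fun k hk ↦ by
    have hk_mem : k ∈ ({2, 3, 4} : Finset ℕ) := hβ hk
    simp only [Finset.mem_insert, Finset.mem_singleton] at hk_mem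
    lia
  have hdeg_four : deg 4 β < 0 := (strictAnti_deg (loopNumber_pos harity) hd).trans_le hdeg
  rw [deg_four_neg_iff, length_of_support_subset hβ, halfEdges_of_support_subset hβ] at hdeg_four
  lia

end MultiIndex

/-- Divergent subdiagram multi-indices for the `Φ⁴` model in dimension `d < 4`:
if `β : ℕ → ℕ` is a multi-index supported on `{2,3,4}` with `β(3)` even and
`β(2) + β(3) ≥ 1`, and its degree
`deg(z^β) = d(β(2)+β(3)+β(4)−1) − ((d−2)/2)(2β(2)+3β(3)+4β(4))` is `≤ 0`,
then either `β(2) = 1 ∧ β(3) = 0` (i.e. `z^β = z_2 z_4^{β(4)}`), or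
`β(2) = 0 ∧ β(3) = 2` (i.e. `z^β = z_3² z_4^{β(4)}`). -/
theorem stmt_12 (d : ℝ) (hd : d < 4) (β : ℕ → ℕ)
    (hsupp : ∀ k : ℕ, k ∉ ({2, 3, 4} : Set ℕ) → β k = 0)
    (heven : Even (β 3)) (hpos : 1 ≤ β 2 + β 3)
    (hdeg : d * (((β 2 : ℝ) + (β 3 : ℝ) + (β 4 : ℝ)) - 1) -
        (d - 2) / 2 * (2 * (β 2 : ℝ) + 3 * (β 3 : ℝ) + 4 * (β 4 : ℝ)) ≤ 0) :
    (β 2 = 1 ∧ β 3 = 0) ∨ (β 2 = 0 ∧ β 3 = 2) := by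
  let γ : MultiIndex := Finsupp.onFinset {2, 3, 4} β fun k hk ↦ by
    simpa using not_imp_comm.mp (hsupp k) hk
  have hγ : γ.support ⊆ {2, 3, 4} := Finsupp.support_onFinset_subset
  have hγ_deg : γ.deg d ≤ 0 := by
    rw [MultiIndex.deg, MultiIndex.length_of_support_subset hγ,
      MultiIndex.halfEdges_of_support_subset hγ]
    exact_mod_cast hdeg
  have hlt : 2 * β 2 + β 3 < 4 := MultiIndex.two_mul_add_lt_four_of_deg_nonpos hd hγ hγ_deg
  obtain ⟨m, hm⟩ := heven
  lia
end

section
/- Fix n ≥ 4. For p ≥ 2 let a_p, b_p ≥ 0 be integers with a_2 = 0, set m = Σ_p (a_p + b_p) ≥ 1 and s = Σ_p p(a_p + b_p), and assume s ≤ n. Consider the forest z^{β_1}⋯z^{β_m} consisting of a_p copies of z_2 z_4^{p−1} and b_p copies of z_3² z_4^{p−2}. Then the coefficient E(z^{β_1}⋯z^{β_m}, z^α, z_4^n) vanishes for every multi-index z^α except z^α = z_2^m z_4^{n−s}, and E(z^{β_1}⋯z^{β_m}, z_2^m z_4^{n−s}, z_4^n) = (n!/(n−s)!) ∏_{p≥2}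 (1/a_p!)(4!/(4(p−1)!))^{a_p} (1/b_p!)(4!/(3(p−2)!))^{b_p}. -/
open scoped Classical

/-- A multi-index: a finitely supported function `β : ℕ → ℕ`, representing the
monomial `z^β = ∏_k z_k^{β(k)}`. -/
abbrev MIdx : Type := ℕ →₀ ℕ

/-- The symmetry factor `S_M(z^β) = ∏_k β(k)!(k!)^{β(k)}`. -/
noncomputable def SM (α : MIdx) : ℝ :=
  ∏ k ∈ α.support, ((α k).factorial : ℝ) * ((k.factorial : ℝ)) ^ (α k)

/-- The symmetry factor of a forest (a multiset of multi-indices):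
`∏_i r_i! S_M(z^{γ_i})^{r_i}` over the distinct factors `γ_i` with multiplicities `r_i`. -/
noncomputable def SMforest (F : Multiset MIdx) : ℝ :=
  ∏ γ ∈ F.toFinset, ((F.count γ).factorial : ℝ) * (SM γ) ^ (F.count γ)

/-- The monomial `z^α` in the polynomial algebra `ℝ[z_0, z_1, z_2, …]`. -/
noncomputable def zmon (α : MIdx) : MvPolynomial ℕ ℝ := MvPolynomial.monomial α 1

/-- The bilinear pairing with `⟨z^α, z^γ⟩ = S_M(z^α) δ_{α,γ}`. -/
noncomputable def pairing (p q : MvPolynomial ℕ ℝ) : ℝ :=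
  ∑ α ∈ p.support, MvPolynomial.coeff α p * MvPolynomial.coeff α q * SM α

/-- The derivation `D = Σ_k z_{k+1} ∂_{z_k}` (the sum is finite on each polynomial). -/
noncomputable def Dmap (p : MvPolynomial ℕ ℝ) : MvPolynomial ℕ ℝ :=
  ∑ k ∈ p.vars, MvPolynomial.X (k + 1) * MvPolynomial.pderiv k p

/-- The coefficient `E(z^{β_1}⋯z^{β_m}, z^α, z^β)` of the Bruned–Hou multi-index
coproduct, for the ordered tuple of multi-indices `B = (β_1,…,β_m)`:
`E = Σ_{k_1,…,k_m ∈ ℕ} Σ_{β̂_1+⋯+β̂_m+α̂ = β} [S_M(z^β)/(S_M(z^{β_1}⋯z^{β_m}) S_M(z^α))]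
· (⟨∏_i ∂_{z_{k_i}} z^α, z^{α̂}⟩/S_M(z^{α̂})) · ∏_i (⟨D^{k_i} z^{β_i}, z^{β̂_i}⟩/S_M(z^{β̂_i}))`.
(The sum over the `k_i` has finitely many nonzero terms, so it is written as a `tsum`;
the decompositions are parametrised by the tuples `β̂` with `Σ_i β̂_i ≤ β`, setting
`α̂ = β − Σ_i β̂_i`.) -/
noncomputable def Ecoef {m : ℕ} (B : Fin m → MIdx) (α β : MIdx) : ℝ :=
  ∑' k : Fin m → ℕ,
    ∑ bh ∈ (Fintype.piFinset fun _ : Fin m => Finset.Iic β).filter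
        fun bh => (∑ i, bh i) ≤ β,
      (SM β / (SMforest (↑(List.ofFn B) : Multiset MIdx) * SM α)) *
        (pairing ((List.ofFn k).foldr (fun j p => MvPolynomial.pderiv j p) (zmon α))
            (zmon (β - ∑ i, bh i)) / SM (β - ∑ i, bh i)) *
        ∏ i, pairing (Dmap^[k i] (zmon (B i))) (zmon (bh i)) / SM (bh i)

/-- The multi-index `z_2 z_4^{p−1}`. -/
noncomputable def ma (p : ℕ) : MIdx := Finsupp.single 2 1 + Finsupp.single 4 (p - 1)

/-- The multi-index `z_3² z_4^{p−2}`. -/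
noncomputable def mb (p : ℕ) : MIdx := Finsupp.single 3 2 + Finsupp.single 4 (p - 2)

/-!
At `z_d^n` only the pure powers of `z_d` in `D^{k_i} z^{β_i}` matter. They are read off from the
flow of `D` restricted to the `z_d`-axis, which sends `z_j` to `x t^{d-j} / (d-j)!` and, being
multiplicative, sends `z^β` to a single monomial in `x` and `t`. So every `k_i` and `β̂_i` is
forced, and the derivatives `∂_{z_{k_i}}` force `z^α = z_d^{n-s} ∏_i z_{k_i}`. By the adjointness
`j! ⟨∂_{z_j} p, z^γ⟩ = ⟨p, z_j z^γ⟩` the factors `S_M(z^α)` and `k_i!` cancel, and each `z^β` in the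
forest is left with the weight `∏_j binom(d, j)^{β(j)} / β(j)!`.
-/

namespace MIdx

/-- The defect `∑_j (d - j) β(j)` of `z^β` relative to the level `d`: the number of applications
of `D` after which `z^β` contributes a multiple of a power of `z_d`. The subtraction is truncated,
so this is meaningful only if no `z_j` with `j > d` divides `z^β`. -/
noncomputable def defect (d : ℕ) (β : MIdx) : ℕ :=
  Finsupp.weight (fun j => d - j) β

/-- The weight `∏_j binom(d, j)^{β(j)} / β(j)!` with which a factor `z^β` of a forest enters
the coproduct coefficients of `z_d^n`. -/
noncomputable def binomWeight (d : ℕ) (β : MIdx) : ℝ :=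
  β.prod fun j r => (d.choose j : ℝ) ^ r / (r.factorial : ℝ)

end MIdx

theorem eq_single_of_le_single {σ : Type*} {d : σ} {n : ℕ} {γ : σ →₀ ℕ}
    (hγ : γ ≤ Finsupp.single d n) :
    γ = Finsupp.single d (γ d) :=
  Finsupp.support_subset_singleton.1 ((Finsupp.support_mono hγ).trans Finsupp.support_single_subset)

section SymmetryFactors

theorem SM_ne_zero (α : MIdx) : SM α ≠ 0 :=
  Finset.prod_ne_zero_iff.2 fun _ _ => by positivity

theorem SM_eq_prod (α : MIdx) :
    SM α = α.prod fun k r => (r.factorial : ℝ) * (k.factorial : ℝ) ^ r :=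
  rfl

theorem SM_single (k r : ℕ) : SM (Finsupp.single k r) = r.factorial * (k.factorial : ℝ) ^ r := by
  rw [SM_eq_prod, Finsupp.prod_single_index (by simp)]

theorem SM_add_single_one (γ : MIdx) (j : ℕ) :
    SM (γ + Finsupp.single j 1) = SM γ * ((γ j + 1) * j.factorial) := by
  let g (k r : ℕ) : ℝ := (r.factorial : ℝ) * (k.factorial : ℝ) ^ r
  have split_at (α : MIdx) : SM α = g j (α j) * (α.erase j).prod g :=
    (Finsupp.mul_prod_erase' α j g fun k => by simp [g]).symm
  have herase : (γ + Finsupp.single j 1).erase j = γ.erase j := by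
    rw [Finsupp.erase_add, Finsupp.erase_single, add_zero]
  rw [split_at, split_at γ, herase]
  simp only [g, Finsupp.add_apply, Finsupp.single_eq_same, Nat.factorial_succ, Nat.cast_mul,
    Nat.cast_succ]
  ring

theorem SMforest_eq_prod_factorial_count_mul (F : Multiset MIdx) :
    SMforest F = (∏ γ ∈ F.toFinset, ((F.count γ).factorial : ℝ)) * (F.map SM).prod := by
  rw [SMforest, Finset.prod_mul_distrib, Finset.prod_multiset_map_count]

end SymmetryFactors

section Pairing

open MvPolynomial

theorem pairing_zmon (p : MvPolynomial ℕ ℝ) (γ : MIdx) :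
    pairing p (zmon γ) = coeff γ p * SM γ := by
  rw [pairing, Finset.sum_eq_single γ]
  · simp [zmon]
  · intro α _ hα
    simp [zmon, coeff_monomial, hα.symm]
  · intro hγ
    simp [notMem_support_iff.1 hγ]

theorem pairing_zmon_div_SM (p : MvPolynomial ℕ ℝ) (γ : MIdx) :
    pairing p (zmon γ) / SM γ = coeff γ p := by
  rw [pairing_zmon, mul_div_cancel_right₀ _ (SM_ne_zero γ)]

theorem pairing_pderiv_mul_factorial (p : MvPolynomial ℕ ℝ) (γ : MIdx) (j : ℕ) :
    pairing (pderiv j p) (zmon γ) * j.factorial = pairing p (zmon (γ + Finsupp.single j 1)) := by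
  rw [pairing_zmon, pairing_zmon, coeff_pderiv, SM_add_single_one]
  ring

theorem pairing_foldr_pderiv_mul_prod_factorial (p : MvPolynomial ℕ ℝ) (ks : List ℕ) (γ : MIdx) :
    pairing (ks.foldr (fun j p => pderiv j p) p) (zmon γ) *
        (ks.map fun k => (k.factorial : ℝ)).prod =
      pairing p (zmon (γ + (ks.map fun k => Finsupp.single k 1).sum)) := by
  induction ks generalizing γ with
  | nil => simp
  | cons k ks ih =>
    rw [List.foldr_cons, List.map_cons, List.prod_cons, List.map_cons, List.sum_cons, ← mul_assoc,
      pairing_pderiv_mul_factorial, ih, add_assoc]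

end Pairing

section Flow

open Polynomial

/-- The flow of `D` seen on the `z_d`-axis: `p` is sent to the polynomial
`∑_k (D^k p)|_{z_d = x, z_j = 0 (j ≠ d)} t^k / k!` in `t` over `ℝ[x]`. As the flow of a derivation
it is multiplicative, hence it is encoded by its values `x t^{d-j} / (d-j)!` on the `z_j`. -/
noncomputable def axisFlow (d : ℕ) : MvPolynomial ℕ ℝ →ₐ[ℝ] ℝ[X][X] :=
  MvPolynomial.aeval fun j =>
    if j ≤ d then C (C ((d - j).factorial : ℝ)⁻¹ * X) * X ^ (d - j) else 0

theorem axisFlow_X (d j : ℕ) :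
    axisFlow d (MvPolynomial.X j) =
      if j ≤ d then C (C ((d - j).factorial : ℝ)⁻¹ * X) * X ^ (d - j) else 0 :=
  MvPolynomial.aeval_X _ j

theorem derivative_axisFlow_X (d j : ℕ) :
    derivative (axisFlow d (MvPolynomial.X j)) = axisFlow d (MvPolynomial.X (j + 1)) := by
  rw [axisFlow_X, axisFlow_X]
  rcases lt_trichotomy j d with hlt | rfl | hgt
  · obtain ⟨e, rfl⟩ := Nat.exists_eq_add_of_lt hlt
    have hsucc : j + e + 1 - j = e + 1 := by omega
    have hpred : j + e + 1 - (j + 1) = e := by omega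
    have hfactorial : ((e + 1).factorial : ℝ)⁻¹ * (e + 1) = (e.factorial : ℝ)⁻¹ := by
      rw [Nat.factorial_succ]
      push_cast
      field_simp
    rw [if_pos (by omega), if_pos (by omega), hsucc, hpred, derivative_C_mul_X_pow,
      ← hfactorial, Nat.add_sub_cancel]
    simp only [map_mul, map_add, map_natCast, map_one, Nat.cast_add, Nat.cast_one]
    ring
  · simp
  · rw [if_neg (by omega), if_neg (by omega), derivative_zero]

theorem Dmap_eq_mkDerivation (p : MvPolynomial ℕ ℝ) :
    Dmap p = MvPolynomial.mkDerivation ℝ (fun k => MvPolynomial.X (k + 1)) p := by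
  have hsum : Dmap p = (∑ k ∈ p.vars, (MvPolynomial.X (k + 1) : MvPolynomial ℕ ℝ) •
      MvPolynomial.pderiv (R := ℝ) k) p := by
    rw [← Derivation.coeFnAddMonoidHom_apply, map_sum, Finset.sum_apply]
    rfl
  rw [hsum]
  refine MvPolynomial.derivation_eq_of_forall_mem_vars fun i hi => ?_
  rw [MvPolynomial.mkDerivation_X, ← Derivation.coeFnAddMonoidHom_apply, map_sum]
  simp [MvPolynomial.pderiv_X, Pi.single_apply, hi]

theorem axisFlow_Dmap (d : ℕ) (p : MvPolynomial ℕ ℝ) :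
    axisFlow d (Dmap p) = derivative (axisFlow d p) := by
  rw [Dmap_eq_mkDerivation]
  induction p using MvPolynomial.induction_on with
  | C r =>
    rw [MvPolynomial.derivation_C, map_zero, ← MvPolynomial.algebraMap_eq, AlgHom.commutes,
      IsScalarTower.algebraMap_apply ℝ ℝ[X] ℝ[X][X], Polynomial.algebraMap_eq, derivative_C]
  | add p q hp hq => simp only [map_add, hp, hq]
  | mul_X p j hp =>
    rw [Derivation.leibniz, MvPolynomial.mkDerivation_X]
    simp only [map_add, map_mul, smul_eq_mul, hp, derivative_mul, derivative_axisFlow_X]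
    ring

theorem axisFlow_iterate_Dmap (d k : ℕ) (p : MvPolynomial ℕ ℝ) :
    axisFlow d (Dmap^[k] p) = derivative^[k] (axisFlow d p) :=
  Function.Semiconj.iterate_right (axisFlow_Dmap d) k p

theorem coeff_zero_axisFlow_X (d j : ℕ) :
    (axisFlow d (MvPolynomial.X j)).coeff 0 = if j = d then X else 0 := by
  rcases lt_trichotomy j d with hlt | rfl | hgt
  · simp [axisFlow_X, hlt.le, hlt.ne, coeff_X_pow, (Nat.sub_pos_of_lt hlt).ne]
  · simp [axisFlow_X]
  · simp [axisFlow_X, hgt.not_ge, hgt.ne']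

theorem coeff_coeff_zero_axisFlow (d j : ℕ) (p : MvPolynomial ℕ ℝ) :
    ((axisFlow d p).coeff 0).coeff j = MvPolynomial.coeff (Finsupp.single d j) p := by
  induction p using MvPolynomial.induction_on generalizing j with
  | C r =>
    rw [← MvPolynomial.algebraMap_eq, AlgHom.commutes,
      IsScalarTower.algebraMap_apply ℝ ℝ[X] ℝ[X][X], Polynomial.algebraMap_eq, coeff_C_zero,
      Polynomial.algebraMap_eq, coeff_C, MvPolynomial.algebraMap_eq, MvPolynomial.coeff_C]
    simp [eq_comm]
  | add p q hp hq => simp only [map_add, coeff_add, MvPolynomial.coeff_add, hp, hq]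
  | mul_X p i hp =>
    rw [map_mul, mul_coeff_zero, coeff_zero_axisFlow_X, MvPolynomial.coeff_mul_X']
    obtain rfl | hi := eq_or_ne i d
    · cases j with
      | zero => simp
      | succ j => simp [hp]
    · simp [hi]

theorem coeff_single_iterate_Dmap (d j k : ℕ) (p : MvPolynomial ℕ ℝ) :
    MvPolynomial.coeff (Finsupp.single d j) (Dmap^[k] p) =
      k.factorial * ((axisFlow d p).coeff k).coeff j := by
  rw [← coeff_coeff_zero_axisFlow, axisFlow_iterate_Dmap, coeff_iterate_derivative, zero_add,
    Nat.descFactorial_self, coeff_smul, nsmul_eq_mul]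

variable {d : ℕ} {β : MIdx}

theorem prod_inv_factorial_pow (hβ : ∀ j ∈ β.support, j ≤ d) :
    (β.prod fun j r => ((d - j).factorial : ℝ)⁻¹ ^ r) =
      β.binomWeight d * SM β / (d.factorial : ℝ) ^ β.degree := by
  rw [eq_div_iff (by positivity), MIdx.binomWeight, SM, Finsupp.degree_apply,
    ← Finset.prod_pow_eq_pow_sum, Finsupp.prod, Finsupp.prod, ← Finset.prod_mul_distrib,
    ← Finset.prod_mul_distrib]
  refine Finset.prod_congr rfl fun j hj => ?_
  have hchoose : ((d - j).factorial : ℝ)⁻¹ * d.factorial = d.choose j * j.factorial := by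
    rw [← Nat.choose_mul_factorial_mul_factorial (hβ j hj)]
    push_cast
    field_simp
  have hfactorial : ((β j).factorial : ℝ) ≠ 0 := by positivity
  rw [← mul_pow, hchoose, mul_pow]
  field_simp

theorem axisFlow_zmon (hβ : ∀ j ∈ β.support, j ≤ d) :
    axisFlow d (zmon β) =
      C (C (β.binomWeight d * SM β / (d.factorial : ℝ) ^ β.degree) * X ^ β.degree) *
        X ^ β.defect d := by
  rw [← prod_inv_factorial_pow hβ, zmon, axisFlow, MvPolynomial.aeval_monomial, map_one, one_mul,
    Finsupp.prod, Finset.prod_congr rfl fun j hj => by rw [if_pos (hβ j hj)]]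
  simp only [mul_pow, Finset.prod_mul_distrib, ← map_pow, ← map_prod, ← pow_mul,
    Finset.prod_pow_eq_pow_sum, map_mul]
  simp [MIdx.defect, Finsupp.weight_apply, Finsupp.degree_apply, Finsupp.sum, Finsupp.prod,
    mul_comm]

theorem coeff_single_iterate_Dmap_zmon (hβ : ∀ j ∈ β.support, j ≤ d) (j k : ℕ) :
    MvPolynomial.coeff (Finsupp.single d j) (Dmap^[k] (zmon β)) =
      if k = β.defect d ∧ j = β.degree then
        k.factorial * (β.binomWeight d * SM β / (d.factorial : ℝ) ^ β.degree) else 0 := by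
  rw [coeff_single_iterate_Dmap, axisFlow_zmon hβ, coeff_C_mul_X_pow]
  split_ifs <;> simp_all

end Flow

section CoproductCoefficient

variable {m d n : ℕ} {B : Fin m → MIdx}

theorem prod_coeff_iterate_Dmap_eq_zero (hB : ∀ i, ∀ j ∈ (B i).support, j ≤ d)
    {k : Fin m → ℕ} {γ : Fin m → MIdx} (hγ : ∀ i, γ i ≤ Finsupp.single d n)
    (hne : ∃ i, k i ≠ (B i).defect d ∨ γ i ≠ Finsupp.single d (B i).degree) :
    ∏ i, MvPolynomial.coeff (γ i) (Dmap^[k i] (zmon (B i))) = 0 := by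
  obtain ⟨i, hi⟩ := hne
  refine Finset.prod_eq_zero (Finset.mem_univ i) ?_
  rw [eq_single_of_le_single (hγ i), coeff_single_iterate_Dmap_zmon (hB i), if_neg]
  rintro ⟨hk, hdegree⟩
  refine hi.elim (· hk) (· ?_)
  rw [eq_single_of_le_single (hγ i), hdegree]

/-- Expanding at `z_d^n` leaves a single term: `k_i` is the defect of `β_i` and
`β̂_i = z_d^{|β_i|}`. -/
theorem Ecoef_single_eq_term (hB : ∀ i, ∀ j ∈ (B i).support, j ≤ d)
    (hn : ∑ i, (B i).degree ≤ n) (α : MIdx) :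
    Ecoef B α (Finsupp.single d n) =
      SM (Finsupp.single d n) / (SMforest (List.ofFn B : Multiset MIdx) * SM α) *
        (pairing ((List.ofFn fun i => (B i).defect d).foldr (fun j p => MvPolynomial.pderiv j p)
          (zmon α)) (zmon (Finsupp.single d (n - ∑ i, (B i).degree))) /
            SM (Finsupp.single d (n - ∑ i, (B i).degree))) *
        ∏ i, (((B i).defect d).factorial *
          ((B i).binomWeight d * SM (B i) / (d.factorial : ℝ) ^ (B i).degree)) := by
  have hsum : ∑ i, Finsupp.single d (B i).degree = Finsupp.single d (∑ i, (B i).degree) :=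
    (Finsupp.single_finsetSum ..).symm
  have hle : Finsupp.single d (∑ i, (B i).degree) ≤ Finsupp.single d n :=
    Finsupp.single_le_single.2 hn
  have hle_of_mem {γ : Fin m → MIdx} (hγ : γ ∈ (Fintype.piFinset fun _ : Fin m =>
      Finset.Iic (Finsupp.single d n)).filter fun γ => ∑ i, γ i ≤ Finsupp.single d n) (i : Fin m) :
      γ i ≤ Finsupp.single d n :=
    Finset.mem_Iic.1 (Fintype.mem_piFinset.1 (Finset.mem_filter.1 hγ).1 i)
  simp only [Ecoef, pairing_zmon_div_SM]
  rw [tsum_eq_single fun i => (B i).defect d,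
    Finset.sum_eq_single fun i => Finsupp.single d (B i).degree]
  · rw [hsum, ← Finsupp.single_tsub]
    simp only [coeff_single_iterate_Dmap_zmon (hB _), and_self, if_true]
  · intro γ hγ hne
    obtain ⟨i, hi⟩ := Function.ne_iff.1 hne
    rw [prod_coeff_iterate_Dmap_eq_zero hB (hle_of_mem hγ) ⟨i, Or.inr hi⟩, mul_zero]
  · intro hnotMem
    refine absurd ?_ hnotMem
    rw [Finset.mem_filter, Fintype.mem_piFinset, hsum]
    refine ⟨fun i => Finset.mem_Iic.2 (le_trans ?_ hle), hle⟩
    rw [← hsum]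
    exact Finset.single_le_sum (f := fun i => Finsupp.single d (B i).degree)
      (fun _ _ => zero_le) (Finset.mem_univ i)
  · intro k hk
    obtain ⟨i, hi⟩ := Function.ne_iff.1 hk
    refine Finset.sum_eq_zero fun γ hγ => ?_
    rw [prod_coeff_iterate_Dmap_eq_zero hB (hle_of_mem hγ) ⟨i, Or.inl hi⟩, mul_zero]

theorem pairing_foldr_pderiv_zmon (k : Fin m → ℕ) (α γ : MIdx) :
    pairing ((List.ofFn k).foldr (fun j p => MvPolynomial.pderiv j p) (zmon α)) (zmon γ) =
      if α = ∑ i, Finsupp.single (k i) 1 + γ then SM α / ∏ i, ((k i).factorial : ℝ) else 0 := by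
  have hfactorial : ∏ i, ((k i).factorial : ℝ) ≠ 0 :=
    Finset.prod_ne_zero_iff.2 fun _ _ => by positivity
  have hadjoint := pairing_foldr_pderiv_mul_prod_factorial (zmon α) (List.ofFn k) γ
  simp only [List.map_ofFn, List.prod_ofFn, List.sum_ofFn, Function.comp_apply] at hadjoint
  rw [eq_div_of_mul_eq hfactorial hadjoint, pairing_zmon, zmon, MvPolynomial.coeff_monomial,
    add_comm γ]
  split_ifs with hα
  · rw [← hα, one_mul]
  · rw [zero_mul, zero_div]

theorem Ecoef_single_eq_zero (hB : ∀ i, ∀ j ∈ (B i).support, j ≤ d)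
    (hn : ∑ i, (B i).degree ≤ n) (α : MIdx)
    (hα : α ≠ ∑ i, Finsupp.single ((B i).defect d) 1 +
      Finsupp.single d (n - ∑ i, (B i).degree)) :
    Ecoef B α (Finsupp.single d n) = 0 := by
  rw [Ecoef_single_eq_term hB hn, pairing_foldr_pderiv_zmon, if_neg hα, zero_div, mul_zero,
    zero_mul]

theorem Ecoef_single (hB : ∀ i, ∀ j ∈ (B i).support, j ≤ d) (hn : ∑ i, (B i).degree ≤ n) :
    Ecoef B (∑ i, Finsupp.single ((B i).defect d) 1 + Finsupp.single d (n - ∑ i, (B i).degree))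
        (Finsupp.single d n) =
      n.factorial / (n - ∑ i, (B i).degree).factorial *
        ((∏ γ ∈ (List.ofFn B : Multiset MIdx).toFinset,
          (((List.ofFn B : Multiset MIdx).count γ).factorial : ℝ))⁻¹ *
        ∏ i, (B i).binomWeight d) := by
  have hSM : ((List.ofFn B : Multiset MIdx).map SM).prod = ∏ i, SM (B i) := by
    rw [← Fin.univ_val_map, Multiset.map_map]
    rfl
  have hpow : (d.factorial : ℝ) ^ n =
      d.factorial ^ (n - ∑ i, (B i).degree) * d.factorial ^ ∑ i, (B i).degree := by
    rw [← pow_add, Nat.sub_add_cancel hn]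
  rw [Ecoef_single_eq_term hB hn, pairing_foldr_pderiv_zmon, if_pos rfl,
    SMforest_eq_prod_factorial_count_mul, hSM, SM_single, SM_single, hpow,
    Finset.prod_mul_distrib, Finset.prod_div_distrib, Finset.prod_mul_distrib,
    Finset.prod_pow_eq_pow_sum]
  have hSMα := SM_ne_zero (∑ i, Finsupp.single ((B i).defect d) 1 +
    Finsupp.single d (n - ∑ i, (B i).degree))
  have hSMB : ∏ i, SM (B i) ≠ 0 := Finset.prod_ne_zero_iff.2 fun i _ => SM_ne_zero (B i)
  have hfactorial : ∏ i, (((B i).defect d).factorial : ℝ) ≠ 0 :=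
    Finset.prod_ne_zero_iff.2 fun _ _ => by positivity
  have hcount : ∏ γ ∈ (List.ofFn B : Multiset MIdx).toFinset,
      (((List.ofFn B : Multiset MIdx).count γ).factorial : ℝ) ≠ 0 :=
    Finset.prod_ne_zero_iff.2 fun _ _ => by positivity
  field_simp

end CoproductCoefficient

section Forests

variable {ι κ M : Type*} [CommMonoid M] {S : Finset ι} {g : ι → κ}

@[to_additive]
theorem prod_map_sum_replicate (S : Finset ι) (g : ι → κ) (r : ι → ℕ) (f : κ → M) :
    ((∑ x ∈ S, Multiset.replicate (r x) (g x)).map f).prod = ∏ x ∈ S, f (g x) ^ r x := by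
  rw [← Multiset.coe_mapAddMonoidHom, map_sum, Multiset.prod_sum]
  simp

theorem count_sum_replicate [DecidableEq κ] (hg : Set.InjOn g S) (r : ι → ℕ) {x : ι} (hx : x ∈ S) :
    (∑ y ∈ S, Multiset.replicate (r y) (g y)).count (g x) = r x := by
  rw [Multiset.count_sum', Finset.sum_eq_single_of_mem x hx, Multiset.count_replicate_self]
  intro y hy hyx
  rw [Multiset.count_replicate, if_neg fun h => hyx (hg hy hx h)]

theorem prod_toFinset_sum_replicate [DecidableEq κ] (hg : Set.InjOn g S) (r : ι → ℕ) {φ : ℕ → M}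
    (hφ : φ 0 = 1) :
    ∏ γ ∈ (∑ x ∈ S, Multiset.replicate (r x) (g x)).toFinset,
        φ ((∑ x ∈ S, Multiset.replicate (r x) (g x)).count γ) = ∏ x ∈ S, φ (r x) := by
  have hsubset : (∑ x ∈ S, Multiset.replicate (r x) (g x)).toFinset ⊆ S.image g := by
    intro γ hγ
    obtain ⟨x, hx, hγx⟩ := Multiset.mem_sum.1 (Multiset.mem_toFinset.1 hγ)
    exact Finset.mem_image.2 ⟨x, hx, (Multiset.eq_of_mem_replicate hγx).symm⟩
  rw [Finset.prod_subset hsubset, Finset.prod_image hg]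
  · exact Finset.prod_congr rfl fun x hx => by rw [count_sum_replicate hg r hx]
  · intro γ _ hγ
    rw [Multiset.count_eq_zero.2 (mt Multiset.mem_toFinset.2 hγ), hφ]

@[to_additive]
theorem prod_eq_of_ofFn_eq_sum_replicate {m : ℕ} {B : Fin m → κ} {r : ι → ℕ}
    (hB : (List.ofFn B : Multiset κ) = ∑ x ∈ S, Multiset.replicate (r x) (g x)) (f : κ → M) :
    ∏ i, f (B i) = ∏ x ∈ S, f (g x) ^ r x := by
  rw [← prod_map_sum_replicate, ← hB, Multiset.map_coe, Multiset.prod_coe, List.map_ofFn,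
    List.prod_ofFn]
  rfl

end Forests

theorem stmt_13_general {ι : Type*} {d n m s : ℕ} (S : Finset ι) (g : ι → MIdx) (r : ι → ℕ)
    (hg : Set.InjOn g S) (hd : ∀ x ∈ S, ∀ j ∈ (g x).support, j ≤ d)
    (hs : s = ∑ x ∈ S, r x * (g x).degree) (hsn : s ≤ n) (B : Fin m → MIdx)
    (hB : (List.ofFn B : Multiset MIdx) = ∑ x ∈ S, Multiset.replicate (r x) (g x)) :
    (∀ α : MIdx, α ≠ ∑ x ∈ S, Finsupp.single ((g x).defect d) (r x) + Finsupp.single d (n - s) →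
        Ecoef B α (Finsupp.single d n) = 0) ∧
    Ecoef B (∑ x ∈ S, Finsupp.single ((g x).defect d) (r x) + Finsupp.single d (n - s))
        (Finsupp.single d n) =
      n.factorial / (n - s).factorial *
        ∏ x ∈ S, ((r x).factorial : ℝ)⁻¹ * (g x).binomWeight d ^ r x := by
  have hsupport (i) : ∀ j ∈ (B i).support, j ≤ d := by
    have hi : B i ∈ (List.ofFn B : Multiset MIdx) := List.mem_ofFn.2 ⟨i, rfl⟩
    obtain ⟨x, hx, hix⟩ := Multiset.mem_sum.1 (hB ▸ hi)
    rw [Multiset.eq_of_mem_replicate hix]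
    exact hd x hx
  have hdegree : ∑ i, (B i).degree = s := by
    rw [hs, sum_eq_of_ofFn_eq_sum_replicate hB Finsupp.degree]
    simp only [smul_eq_mul]
  have hdefect : ∑ i, Finsupp.single ((B i).defect d) 1 =
      ∑ x ∈ S, Finsupp.single ((g x).defect d) (r x) := by
    rw [sum_eq_of_ofFn_eq_sum_replicate hB fun β => Finsupp.single (β.defect d) 1]
    simp only [Finsupp.smul_single_one]
  have hzero := Ecoef_single_eq_zero hsupport (hdegree.trans_le hsn)
  have hvalue := Ecoef_single hsupport (hdegree.trans_le hsn)
  rw [hdegree, hdefect] at hzero hvalue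
  refine ⟨hzero, ?_⟩
  rw [hvalue, hB, prod_eq_of_ofFn_eq_sum_replicate hB fun β => β.binomWeight d,
    prod_toFinset_sum_replicate hg r (φ := fun k => (k.factorial : ℝ)) (by simp),
    Finset.prod_mul_distrib, Finset.prod_inv_distrib]

section LevelFour

theorem degree_ma {p : ℕ} (hp : 2 ≤ p) : (ma p).degree = p := by
  rw [ma, map_add, Finsupp.degree_single, Finsupp.degree_single]
  omega

theorem degree_mb {p : ℕ} (hp : 2 ≤ p) : (mb p).degree = p := by
  rw [mb, map_add, Finsupp.degree_single, Finsupp.degree_single]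
  omega

theorem defect_ma (p : ℕ) : (ma p).defect 4 = 2 := by
  simp [MIdx.defect, ma, Finsupp.weight_single, -Finsupp.single_tsub]

theorem defect_mb (p : ℕ) : (mb p).defect 4 = 2 := by
  simp [MIdx.defect, mb, Finsupp.weight_single, -Finsupp.single_tsub]

theorem le_four_of_mem_support_sumElim_ma_mb (x : ℕ ⊕ ℕ) :
    ∀ j ∈ (Sum.elim ma mb x : MIdx).support, j ≤ 4 := by
  intro j hj
  by_contra! h
  rcases x with p | p
  · simp [ma, h.ne, (show 2 ≠ j by omega)] at hj
  · simp [mb, h.ne, (show 3 ≠ j by omega)] at hj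

theorem sum_mul_degree_sumElim_ma_mb (n : ℕ) (a b : ℕ → ℕ) :
    ∑ x ∈ (Finset.Icc 2 n).disjSum (Finset.Icc 2 n),
        Sum.elim a b x * (Sum.elim ma mb x).degree =
      ∑ p ∈ Finset.Icc 2 n, p * (a p + b p) := by
  rw [Finset.sum_disjSum, ← Finset.sum_add_distrib]
  refine Finset.sum_congr rfl fun p hp => ?_
  have hp2 := (Finset.mem_Icc.1 hp).1
  rw [Sum.elim_inl, Sum.elim_inl, Sum.elim_inr, Sum.elim_inr, degree_ma hp2, degree_mb hp2]
  ring

theorem binomWeight_single_add_single {d j k : ℕ} (hjk : j ≠ k) (q r : ℕ) :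
    MIdx.binomWeight d (Finsupp.single j q + Finsupp.single k r) =
      (d.choose j : ℝ) ^ q / q.factorial * ((d.choose k : ℝ) ^ r / r.factorial) := by
  rw [MIdx.binomWeight, Finsupp.prod_add_index_of_disjoint, Finsupp.prod_single_index (by simp),
    Finsupp.prod_single_index (by simp)]
  exact (Finset.disjoint_singleton.2 hjk).mono Finsupp.support_single_subset
    Finsupp.support_single_subset

theorem binomWeight_ma (p : ℕ) :
    (ma p).binomWeight 4 = (Nat.factorial 4 : ℝ) / (4 * (p - 1).factorial) := by
  rw [ma, binomWeight_single_add_single (by norm_num)]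
  norm_num [Nat.choose, Nat.factorial]
  ring

theorem binomWeight_mb (p : ℕ) :
    (mb p).binomWeight 4 = (Nat.factorial 4 : ℝ) / (3 * (p - 2).factorial) := by
  rw [mb, binomWeight_single_add_single (by norm_num)]
  norm_num [Nat.choose, Nat.factorial]
  ring

theorem ma_ne_mb (p q : ℕ) : ma p ≠ mb q := by
  intro h
  simpa [ma, mb] using DFunLike.congr_fun h 2

theorem injOn_sumElim_ma_mb (n : ℕ) :
    Set.InjOn (Sum.elim ma mb) ((Finset.Icc 2 n).disjSum (Finset.Icc 2 n) : Finset (ℕ ⊕ ℕ)) := by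
  rintro (p | p) hp (q | q) hq h <;>
    simp only [Finset.mem_coe, Finset.inl_mem_disjSum, Finset.inr_mem_disjSum,
      Finset.mem_Icc, Sum.elim_inl, Sum.elim_inr] at hp hq h
  · rw [← degree_ma hp.1, h, degree_ma hq.1]
  · exact absurd h (ma_ne_mb p q)
  · exact absurd h.symm (ma_ne_mb q p)
  · rw [← degree_mb hp.1, h, degree_mb hq.1]

end LevelFour

/-- Fix `n ≥ 4` and multiplicities `a_p, b_p` (`p ≥ 2`, `a_2 = 0`) with
`m = Σ_p (a_p+b_p) ≥ 1` and `s = Σ_p p(a_p+b_p) ≤ n`. For any ordered tuple `B`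
realising the forest consisting of `a_p` copies of `z_2 z_4^{p−1}` and `b_p` copies of
`z_3² z_4^{p−2}`, the coefficient `E(B, z^α, z_4^n)` vanishes unless
`z^α = z_2^m z_4^{n−s}`, and
`E(B, z_2^m z_4^{n−s}, z_4^n) = (n!/(n−s)!) ∏_{p≥2} (1/a_p!)(4!/(4(p−1)!))^{a_p}
(1/b_p!)(4!/(3(p−2)!))^{b_p}`. -/
theorem stmt_13 (n : ℕ) (hn : 4 ≤ n) (a b : ℕ → ℕ) (ha2 : a 2 = 0)
    (hsupp : ∀ p : ℕ, p ∉ Finset.Icc 2 n → a p = 0 ∧ b p = 0)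
    (m s : ℕ)
    (hm : m = ∑ p ∈ Finset.Icc 2 n, (a p + b p))
    (hs : s = ∑ p ∈ Finset.Icc 2 n, p * (a p + b p))
    (hm1 : 1 ≤ m) (hsn : s ≤ n)
    (B : Fin m → MIdx)
    (hB : (↑(List.ofFn B) : Multiset MIdx) =
      ∑ p ∈ Finset.Icc 2 n,
        (Multiset.replicate (a p) (ma p) + Multiset.replicate (b p) (mb p))) :
    (∀ α : MIdx, α ≠ Finsupp.single 2 m + Finsupp.single 4 (n - s) →
        Ecoef B α (Finsupp.single 4 n) = 0) ∧
    Ecoef B (Finsupp.single 2 m + Finsupp.single 4 (n - s)) (Finsupp.single 4 n) =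
      ((n.factorial : ℝ) / ((n - s).factorial : ℝ)) *
        ∏ p ∈ Finset.Icc 2 n,
          ((((a p).factorial : ℝ))⁻¹ * (((Nat.factorial 4 : ℝ)) / (4 * ((p - 1).factorial : ℝ))) ^ (a p) *
           ((((b p).factorial : ℝ))⁻¹ * (((Nat.factorial 4 : ℝ)) / (3 * ((p - 2).factorial : ℝ))) ^ (b p))) := by
  simpa only [Finset.sum_disjSum, Finset.prod_disjSum, Sum.elim_inl, Sum.elim_inr, defect_ma,
    defect_mb, binomWeight_ma, binomWeight_mb, ← Finset.sum_add_distrib, ← Finset.prod_mul_distrib,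
    ← Finsupp.single_add, ← Finsupp.single_finsetSum, ← hm] using
    stmt_13_general _ _ (Sum.elim a b) (injOn_sumElim_ma_mb n)
      (fun x _ => le_four_of_mem_support_sumElim_ma_mb x)
      (hs.trans (sum_mul_degree_sumElim_ma_mb n a b).symm) hsn B
      (by simpa only [Finset.sum_disjSum, Sum.elim_inl, Sum.elim_inr, Finset.sum_add_distrib]
        using hB)
end
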